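/- arXiv:1407.7347 — 2 statements merged into one kernel-verified Lean document; each statement's English description precedes it below -/
import Mathlib

section
/- Let T > 0 and let (θ̇, ẇ, ż) be smooth functions on [0,T]×ℝ², with θ̇, ż radially symmetric in x and ẇ(t,x) = Ẇ(t,|x|)x/|x| for a smooth Ẇ, such that for each t the functions Γ^β θ̇(t,·), Γ^β ẇ(t,·), Γ^β ż(t,·) are compactly supported in x. Then for every multi-index α there is a constant C_α, independent of t, T and of (θ̇, ẇ, ż), such that for all (t,x) ∈ [0,T]×ℝ²: σ(x)^{1/2}(|Γ^α θ̇(t,x)| + |Γ^α ẇ(t,x)| + |Γ^α ż(t,x)|) ≤ C_α E_{|α|+2}(t)^{1/2}. -/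
/-!
The estimate follows from two Sobolev inequalities in the plane, applied at fixed `t` to
`h = Γ^α u`, where `u` is one of the components `θ̇`, `ẇ₁`, `ẇ₂`, `ż`:

* `h(x,y)² ≤ ‖h‖² + ‖∂₁h‖² + ‖∂₂h‖² + ‖∂₂∂₁h‖²` (`sobolev_plane`);
* `|x| h(x)² ≤ 2 (‖h‖² + ‖∇h‖² + ‖Ωh‖² + ‖∇Ωh‖²)`, with `Ω = x₁∂₂ − x₂∂₁` the rotation field
  (`sobolev_radial`). In polar coordinates one integrates `∂_r (h²)` inwards from infinity along a
  ray and bounds the values on the ray by the Sobolev inequality on each circle, `Ω` being the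
  angular derivative.

Their sum controls `(1 + |x|) h²`. The first right-hand side consists of terms of the energy of
order `|α| + 2`. For the second, `Ω` commutes with `∂_t` and `X`, while `[Ω,∂₁] = −∂₂` and
`[Ω,∂₂] = ∂₁`, so `Ω` may be moved past `Γ^α` at the cost of terms of the same order (`good_rot`).
On the data `Ω` gives nothing new: `Ωθ̇ = Ωż = 0` by radial symmetry (`Om_radial`), and
`Ωẇ₁ = −ẇ₂`, `Ωẇ₂ = ẇ₁` (`Om_vector`).
-/

noncomputable section

open Real MeasureTheory Set

set_option linter.unusedVariables false

/-- A function of time `t` and space `(x, y)`. -/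
abbrev F3 : Type := ℝ → ℝ → ℝ → ℝ

/-- Partial derivative in time. -/
def pt (f : F3) : F3 := fun t x y => deriv (fun s => f s x y) t
/-- Partial derivative in the first space variable. -/
def px (f : F3) : F3 := fun t x y => deriv (fun s => f t s y) x
/-- Partial derivative in the second space variable. -/
def py (f : F3) : F3 := fun t x y => deriv (fun s => f t x s) y

/-- `∂ = (∂_t, ∂_1, ∂_2)`. -/
def pdi : Fin 3 → F3 → F3 := ![pt, px, py]

/-- The scaling field `X = t∂_t + x₁∂₁ + x₂∂₂`. -/
def Xf (f : F3) : F3 := fun t x y => t * pt f t x y + x * px f t x y + y * py f t x y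
/-- The rotation field `Ω = x₁∂₂ − x₂∂₁`. -/
def Om (f : F3) : F3 := fun t x y => x * py f t x y - y * px f t x y
/-- The Lorentz boost `L₁ = t∂₁ + x₁∂_t`. -/
def L1f (f : F3) : F3 := fun t x y => t * px f t x y + x * pt f t x y
/-- The Lorentz boost `L₂ = t∂₂ + x₂∂_t`. -/
def L2f (f : F3) : F3 := fun t x y => t * py f t x y + y * pt f t x y

/-- The family `Γ = (∂_t, ∂_1, ∂_2, X)`. -/
def GammaF : Fin 4 → F3 → F3 := ![pt, px, py, Xf]

/-- Iterated composition `Γ^α` over a word `α`. -/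
def GIter : List (Fin 4) → F3 → F3
  | [], f => f
  | a :: l, f => GammaF a (GIter l f)

/-- The family `Λ = (∂_t, ∂_1, ∂_2, Ω, X, L₁, L₂)`. -/
def LamF : Fin 7 → F3 → F3 := ![pt, px, py, Om, Xf, L1f, L2f]

/-- Iterated composition `Λ^α` over a word `α`. -/
def LIter : List (Fin 7) → F3 → F3
  | [], f => f
  | a :: l, f => LamF a (LIter l f)

/-- Iterated composition `∂^β` over a word `β`. -/
def PIter : List (Fin 3) → F3 → F3
  | [], f => f
  | a :: l, f => pdi a (PIter l f)

/-- `r = |x|`. -/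
def rad (x y : ℝ) : ℝ := Real.sqrt (x ^ 2 + y ^ 2)
/-- `σ₋(t,x) = 1 + |t − |x||`. -/
def sm (t x y : ℝ) : ℝ := 1 + |t - rad x y|
/-- `σ₊(t,x) = 1 + t + |x|`. -/
def sp (t x y : ℝ) : ℝ := 1 + t + rad x y

/-- `f` is a `C^∞` function of `(t, x)`. -/
def Smooth3 (f : F3) : Prop := ContDiff ℝ (⊤ : ℕ∞) (fun p : ℝ × ℝ × ℝ => f p.1 p.2.1 p.2.2)

/-- `Z₁ = ∂₁ + (x₁/|x|)∂_t`. -/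
def Z1 (f : F3) : F3 := fun t x y => px f t x y + (x / rad x y) * pt f t x y
/-- `Z₂ = ∂₂ + (x₂/|x|)∂_t`. -/
def Z2 (f : F3) : F3 := fun t x y => py f t x y + (y / rad x y) * pt f t x y
/-- The family `Z = (Z₁, Z₂)`. -/
def Zi : Fin 2 → F3 → F3 := ![Z1, Z2]

/-- `f` is radially symmetric in the space variables. -/
def RadialF (f : F3) : Prop := ∀ t x y x' y', rad x y = rad x' y' → f t x y = f t x' y'

/-- The `L²(ℝ²)` norm. -/
def L2n (g : ℝ → ℝ → ℝ) : ℝ := Real.sqrt (∫ q : ℝ × ℝ, (g q.1 q.2) ^ 2)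

/-- The `L²` norm over a region `S ⊆ ℝ²`. -/
def L2nS (S : Set (ℝ × ℝ)) (g : ℝ → ℝ → ℝ) : ℝ := Real.sqrt (∫ q in S, (g q.1 q.2) ^ 2)

/-- The energy `E_n(t) = Σ_{|α|≤n} (‖Γ^αθ̇(t)‖² + ‖Γ^αẇ(t)‖² + ‖Γ^αż(t)‖²)`. -/
def En (θd w1 w2 zd : F3) (n : ℕ) (t : ℝ) : ℝ :=
  ∑ k ∈ Finset.range (n + 1), ∑ w : Fin k → Fin 4,
    ((L2n fun x y => GIter (List.ofFn w) θd t x y) ^ 2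
      + (L2n fun x y => GIter (List.ofFn w) w1 t x y) ^ 2
      + (L2n fun x y => GIter (List.ofFn w) w2 t x y) ^ 2
      + (L2n fun x y => GIter (List.ofFn w) zd t x y) ^ 2)

/-- The weighted energy
`Q_n(t) = Σ_{|α|≤n−1} (‖σ₋∇Γ^αθ̇(t)‖ + ‖σ₋∂_tΓ^αẇ(t)‖ + ‖σ₋∇·Γ^αẇ(t)‖)`. -/
def Qn (θd w1 w2 : F3) (n : ℕ) (t : ℝ) : ℝ :=
  ∑ k ∈ Finset.range n, ∑ w : Fin k → Fin 4,
    (L2n (fun x y => sm t x y *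
        Real.sqrt ((px (GIter (List.ofFn w) θd) t x y) ^ 2
          + (py (GIter (List.ofFn w) θd) t x y) ^ 2))
      + L2n (fun x y => sm t x y *
        Real.sqrt ((pt (GIter (List.ofFn w) w1) t x y) ^ 2
          + (pt (GIter (List.ofFn w) w2) t x y) ^ 2))
      + L2n (fun x y => sm t x y *
        (px (GIter (List.ofFn w) w1) t x y + py (GIter (List.ofFn w) w2) t x y)))

/-- Pointwise product of two functions of `(t,x)`. -/
def mulC (c f : F3) : F3 := fun t x y => c t x y * f t x y

/-- Pointwise sum of two functions of `(t,x)`. -/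
def addF (f g : F3) : F3 := fun t x y => f t x y + g t x y

/-- The cutoff `χ(t,x) = χ̂(|x|/(t+2M+2))`. -/
def cutF (M : ℝ) (χhat : ℝ → ℝ) : F3 := fun t x y => χhat (rad x y / (t + 2 * M + 2))

/-- `χ̂` is a smooth cutoff, `χ̂ = 1` on `(−∞,1/2]`, `χ̂ = 0` on `[3/4,∞)`, `0 ≤ χ̂ ≤ 1`. -/
def IsCutoff (χhat : ℝ → ℝ) : Prop :=
  ContDiff ℝ (⊤ : ℕ∞) χhat ∧ (∀ s, χhat s ∈ Icc (0 : ℝ) 1) ∧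
    (∀ s ≤ (1/2 : ℝ), χhat s = 1) ∧ (∀ s, (3/4 : ℝ) ≤ s → χhat s = 0)


/-! ### Smoothness and the partial derivatives -/

/-- The function on `ℝ × ℝ × ℝ` underlying a curried function of `(t, x, y)`. -/
def unc (f : F3) : ℝ × ℝ × ℝ → ℝ := fun p => f p.1 p.2.1 p.2.2

theorem Smooth3.hasFDerivAt {f : F3} (hf : Smooth3 f) (p : ℝ × ℝ × ℝ) :
    HasFDerivAt (unc f) (fderiv ℝ (unc f) p) p :=
  ((ContDiff.differentiable hf (by simp)) p).hasFDerivAt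

theorem pt_eq {f : F3} (hf : Smooth3 f) (t x y : ℝ) :
    pt f t x y = fderiv ℝ (unc f) (t, x, y) (1, 0, 0) := by
  have h : HasDerivAt (fun s : ℝ => ((s, x, y) : ℝ × ℝ × ℝ)) (1, 0, 0) t :=
    (hasDerivAt_id t).prodMk ((hasDerivAt_const t x).prodMk (hasDerivAt_const t y))
  exact ((hf.hasFDerivAt (t, x, y)).comp_hasDerivAt t h).deriv

theorem px_eq {f : F3} (hf : Smooth3 f) (t x y : ℝ) :
    px f t x y = fderiv ℝ (unc f) (t, x, y) (0, 1, 0) := by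
  have h : HasDerivAt (fun s : ℝ => ((t, s, y) : ℝ × ℝ × ℝ)) (0, 1, 0) x :=
    (hasDerivAt_const x t).prodMk ((hasDerivAt_id x).prodMk (hasDerivAt_const x y))
  exact ((hf.hasFDerivAt (t, x, y)).comp_hasDerivAt x h).deriv

theorem py_eq {f : F3} (hf : Smooth3 f) (t x y : ℝ) :
    py f t x y = fderiv ℝ (unc f) (t, x, y) (0, 0, 1) := by
  have h : HasDerivAt (fun s : ℝ => ((t, x, s) : ℝ × ℝ × ℝ)) (0, 0, 1) y :=
    (hasDerivAt_const y t).prodMk ((hasDerivAt_const y x).prodMk (hasDerivAt_id y))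
  exact ((hf.hasFDerivAt (t, x, y)).comp_hasDerivAt y h).deriv

/-- Chain rule along a curve in `(t, x, y)`-space. -/
theorem Smooth3.chain {f : F3} (hf : Smooth3 f) {a b c : ℝ → ℝ} {a' b' c' s : ℝ}
    (ha : HasDerivAt a a' s) (hb : HasDerivAt b b' s) (hc : HasDerivAt c c' s) :
    HasDerivAt (fun s => f (a s) (b s) (c s))
      (a' * pt f (a s) (b s) (c s) + b' * px f (a s) (b s) (c s)
        + c' * py f (a s) (b s) (c s)) s := by
  have h := (hf.hasFDerivAt (a s, b s, c s)).comp_hasDerivAt s (ha.prodMk (hb.prodMk hc))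
  convert! h using 1
  have e : ((a', b', c') : ℝ × ℝ × ℝ)
      = a' • (1, 0, 0) + b' • (0, 1, 0) + c' • (0, 0, 1) := by simp
  rw [e, map_add, map_add, map_smul, map_smul, map_smul, pt_eq hf, px_eq hf, py_eq hf]
  simp only [smul_eq_mul]

theorem Smooth3.fderiv_apply {f : F3} (hf : Smooth3 f) (v : ℝ × ℝ × ℝ) :
    ContDiff ℝ (⊤ : ℕ∞) (fun p => fderiv ℝ (unc f) p v) :=
  (ContDiff.fderiv_right (m := (⊤ : ℕ∞)) hf (by simp)).clm_apply contDiff_const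

theorem Smooth3.pt {f : F3} (hf : Smooth3 f) : Smooth3 (pt f) := by
  have := hf.fderiv_apply (1, 0, 0)
  unfold Smooth3
  simpa only [pt_eq hf] using this

theorem Smooth3.px {f : F3} (hf : Smooth3 f) : Smooth3 (px f) := by
  have := hf.fderiv_apply (0, 1, 0)
  unfold Smooth3
  simpa only [px_eq hf] using this

theorem Smooth3.py {f : F3} (hf : Smooth3 f) : Smooth3 (py f) := by
  have := hf.fderiv_apply (0, 0, 1)
  unfold Smooth3
  simpa only [py_eq hf] using this

theorem Smooth3.Xf {f : F3} (hf : Smooth3 f) : Smooth3 (Xf f) := by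
  have h1 : ContDiff ℝ _ _ := hf.pt
  have h2 : ContDiff ℝ _ _ := hf.px
  have h3 : ContDiff ℝ _ _ := hf.py
  exact ((contDiff_fst.mul h1).add (contDiff_snd.fst.mul h2)).add (contDiff_snd.snd.mul h3)

theorem Smooth3.Om {f : F3} (hf : Smooth3 f) : Smooth3 (Om f) := by
  have h2 : ContDiff ℝ _ _ := hf.px
  have h3 : ContDiff ℝ _ _ := hf.py
  exact (contDiff_snd.fst.mul h3).sub (contDiff_snd.snd.mul h2)

theorem Smooth3.add {f g : F3} (hf : Smooth3 f) (hg : Smooth3 g) : Smooth3 (f + g) :=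
  ContDiff.add hf hg

theorem Smooth3.neg {f : F3} (hf : Smooth3 f) : Smooth3 (-f) := ContDiff.neg hf

theorem Smooth3.GammaF {f : F3} (hf : Smooth3 f) (a : Fin 4) : Smooth3 (GammaF a f) := by
  fin_cases a
  exacts [hf.pt, hf.px, hf.py, hf.Xf]

theorem Smooth3.GIter {f : F3} (hf : Smooth3 f) (l : List (Fin 4)) : Smooth3 (GIter l f) := by
  induction l with
  | nil => exact hf
  | cons a l ih => exact ih.GammaF a

theorem Smooth3.continuous {f : F3} (hf : Smooth3 f) (t : ℝ) :
    Continuous (fun q : ℝ × ℝ => f t q.1 q.2) :=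
  (ContDiff.continuous hf).comp (by fun_prop : Continuous fun q : ℝ × ℝ => (t, q.1, q.2))

theorem Smooth3.ht {f : F3} (hf : Smooth3 f) (t x y : ℝ) :
    HasDerivAt (fun s => f s x y) (_root_.pt f t x y) t := by
  simpa using hf.chain (hasDerivAt_id t) (hasDerivAt_const t x) (hasDerivAt_const t y)

theorem Smooth3.hx {f : F3} (hf : Smooth3 f) (t x y : ℝ) :
    HasDerivAt (fun s => f t s y) (_root_.px f t x y) x := by
  simpa using hf.chain (hasDerivAt_const x t) (hasDerivAt_id x) (hasDerivAt_const x y)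

theorem Smooth3.hy {f : F3} (hf : Smooth3 f) (t x y : ℝ) :
    HasDerivAt (fun s => f t x s) (_root_.py f t x y) y := by
  simpa using hf.chain (hasDerivAt_const y t) (hasDerivAt_const y x) (hasDerivAt_id y)

/-! ### Linearity and commutators -/

theorem fderiv_fderiv_apply {f : F3} (hf : Smooth3 f) (p v w : ℝ × ℝ × ℝ) :
    fderiv ℝ (fun q => fderiv ℝ (unc f) q v) p w = fderiv ℝ (fderiv ℝ (unc f)) p w v := by
  have hd : DifferentiableAt ℝ (fderiv ℝ (unc f)) p :=
    (ContDiff.fderiv_right (m := (⊤ : ℕ∞)) hf (by simp)).differentiable (by simp) p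
  rw [fderiv_clm_apply hd (differentiableAt_const v)]
  simp

theorem snd_symm {f : F3} (hf : Smooth3 f) (p v w : ℝ × ℝ × ℝ) :
    fderiv ℝ (fun q => fderiv ℝ (unc f) q v) p w
      = fderiv ℝ (fun q => fderiv ℝ (unc f) q w) p v := by
  rw [fderiv_fderiv_apply hf, fderiv_fderiv_apply hf]
  have h : ContDiff ℝ (⊤ : ℕ∞) (unc f) := hf
  have h2 : (2 : WithTop ℕ∞) ≤ ((⊤ : ℕ∞) : WithTop ℕ∞) :=
    WithTop.coe_le_coe.2 (le_top : (2 : ℕ∞) ≤ ⊤)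
  exact (h.contDiffAt.isSymmSndFDerivAt (by simpa using h2)) w v

theorem unc_pt {f : F3} (hf : Smooth3 f) :
    unc (pt f) = fun p => fderiv ℝ (unc f) p (1, 0, 0) := by
  funext p; exact pt_eq hf _ _ _

theorem unc_px {f : F3} (hf : Smooth3 f) :
    unc (px f) = fun p => fderiv ℝ (unc f) p (0, 1, 0) := by
  funext p; exact px_eq hf _ _ _

theorem unc_py {f : F3} (hf : Smooth3 f) :
    unc (py f) = fun p => fderiv ℝ (unc f) p (0, 0, 1) := by
  funext p; exact py_eq hf _ _ _

theorem px_pt {f : F3} (hf : Smooth3 f) (t x y : ℝ) :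
    px (pt f) t x y = pt (px f) t x y := by
  rw [px_eq hf.pt, pt_eq hf.px, unc_pt hf, unc_px hf, snd_symm hf]

theorem py_pt {f : F3} (hf : Smooth3 f) (t x y : ℝ) :
    py (pt f) t x y = pt (py f) t x y := by
  rw [py_eq hf.pt, pt_eq hf.py, unc_pt hf, unc_py hf, snd_symm hf]

theorem py_px {f : F3} (hf : Smooth3 f) (t x y : ℝ) :
    py (px f) t x y = px (py f) t x y := by
  rw [py_eq hf.px, px_eq hf.py, unc_px hf, unc_py hf, snd_symm hf]

theorem pt_Om {f : F3} (hf : Smooth3 f) (t x y : ℝ) :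
    pt (Om f) t x y = x * pt (py f) t x y - y * pt (px f) t x y :=
  (((hf.py.ht t x y).const_mul x).sub ((hf.px.ht t x y).const_mul y)).deriv

theorem px_Om {f : F3} (hf : Smooth3 f) (t x y : ℝ) :
    px (Om f) t x y = py f t x y + x * px (py f) t x y - y * px (px f) t x y := by
  have h := (((hasDerivAt_id x).mul (hf.py.hx t x y)).sub ((hf.px.hx t x y).const_mul y)).deriv
  simp only [id, one_mul] at h
  exact h

theorem py_Om {f : F3} (hf : Smooth3 f) (t x y : ℝ) :
    py (Om f) t x y = x * py (py f) t x y - (px f t x y + y * py (px f) t x y) := by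
  have h := (((hf.py.hy t x y).const_mul x).sub ((hasDerivAt_id y).mul (hf.px.hy t x y))).deriv
  simp only [id, one_mul] at h
  exact h

theorem px_Xf {f : F3} (hf : Smooth3 f) (t x y : ℝ) :
    px (Xf f) t x y = t * px (pt f) t x y + (px f t x y + x * px (px f) t x y)
      + y * px (py f) t x y := by
  have h := ((((hf.pt.hx t x y).const_mul t).add ((hasDerivAt_id x).mul (hf.px.hx t x y))).add
    ((hf.py.hx t x y).const_mul y)).deriv
  simp only [id, one_mul] at h
  exact h

theorem py_Xf {f : F3} (hf : Smooth3 f) (t x y : ℝ) :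
    py (Xf f) t x y = t * py (pt f) t x y + x * py (px f) t x y
      + (py f t x y + y * py (py f) t x y) := by
  have h := ((((hf.pt.hy t x y).const_mul t).add ((hf.px.hy t x y).const_mul x)).add
    ((hasDerivAt_id y).mul (hf.py.hy t x y))).deriv
  simp only [id, one_mul] at h
  exact h

theorem Om_pt {f : F3} (hf : Smooth3 f) : Om (pt f) = pt (Om f) := by
  funext t x y
  rw [pt_Om hf, ← py_pt hf, ← px_pt hf]; rfl

theorem Om_px {f : F3} (hf : Smooth3 f) : Om (px f) = px (Om f) + -py f := by
  funext t x y
  change x * py (px f) t x y - y * px (px f) t x y = px (Om f) t x y + -py f t x y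
  rw [px_Om hf, py_px hf]; ring

theorem Om_py {f : F3} (hf : Smooth3 f) : Om (py f) = py (Om f) + px f := by
  funext t x y
  change x * py (py f) t x y - y * px (py f) t x y = py (Om f) t x y + px f t x y
  rw [py_Om hf, py_px hf]; ring

theorem Om_Xf {f : F3} (hf : Smooth3 f) : Om (Xf f) = Xf (Om f) := by
  funext t x y
  change x * py (Xf f) t x y - y * px (Xf f) t x y
    = t * pt (Om f) t x y + x * px (Om f) t x y + y * py (Om f) t x y
  rw [py_Xf hf, px_Xf hf, pt_Om hf, px_Om hf, py_Om hf, px_pt hf, py_pt hf, py_px hf]; ring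

theorem GammaF_add {f g : F3} (hf : Smooth3 f) (hg : Smooth3 g) (a : Fin 4) :
    GammaF a (f + g) = GammaF a f + GammaF a g := by
  have h1 : pt (f + g) = pt f + pt g := by
    funext t x y; exact ((hf.ht t x y).add (hg.ht t x y)).deriv
  have h2 : px (f + g) = px f + px g := by
    funext t x y; exact ((hf.hx t x y).add (hg.hx t x y)).deriv
  have h3 : py (f + g) = py f + py g := by
    funext t x y; exact ((hf.hy t x y).add (hg.hy t x y)).deriv
  have h4 : Xf (f + g) = Xf f + Xf g := by
    funext t x y
    simp only [Xf, h1, h2, h3, Pi.add_apply]; ring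
  fin_cases a
  exacts [h1, h2, h3, h4]

theorem GammaF_neg {f : F3} (hf : Smooth3 f) (a : Fin 4) :
    GammaF a (-f) = -GammaF a f := by
  have h1 : pt (-f) = -pt f := by funext t x y; exact (hf.ht t x y).neg.deriv
  have h2 : px (-f) = -px f := by funext t x y; exact (hf.hx t x y).neg.deriv
  have h3 : py (-f) = -py f := by funext t x y; exact (hf.hy t x y).neg.deriv
  have h4 : Xf (-f) = -Xf f := by
    funext t x y
    simp only [Xf, h1, h2, h3, Pi.neg_apply]; ring
  fin_cases a
  exacts [h1, h2, h3, h4]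

theorem GIter_add {f g : F3} (hf : Smooth3 f) (hg : Smooth3 g) (l : List (Fin 4)) :
    GIter l (f + g) = GIter l f + GIter l g := by
  induction l with
  | nil => rfl
  | cons a l ih => simp only [GIter]; rw [ih, GammaF_add (hf.GIter l) (hg.GIter l)]

theorem GIter_neg {f : F3} (hf : Smooth3 f) (l : List (Fin 4)) :
    GIter l (-f) = -GIter l f := by
  induction l with
  | nil => rfl
  | cons a l ih => simp only [GIter]; rw [ih, GammaF_neg (hf.GIter l)]

theorem GIter_append (l m : List (Fin 4)) (f : F3) : GIter (l ++ m) f = GIter l (GIter m f) := by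
  induction l with
  | nil => rfl
  | cons a l ih => simp only [List.cons_append, GIter]; rw [ih]

theorem Smooth3.zero : Smooth3 (0 : F3) := contDiff_const

theorem GIter_zero (l : List (Fin 4)) : GIter l 0 = 0 := by
  have h := GIter_add Smooth3.zero Smooth3.zero l
  rw [add_zero] at h
  exact left_eq_add.mp h

/-! ### The rotation field on radial data -/

/-- The derivative of `f` along the rotation flow through `(x, y)` at time `0` is `Ω f`. -/
theorem hasDerivAt_rot {f : F3} (hf : Smooth3 f) (t x y : ℝ) :
    HasDerivAt (fun s => f t (x * cos s - y * sin s) (x * sin s + y * cos s)) (Om f t x y) 0 := by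
  have h := hf.chain (hasDerivAt_const (0 : ℝ) t)
    (((hasDerivAt_cos 0).const_mul x).sub ((hasDerivAt_sin 0).const_mul y))
    (((hasDerivAt_sin 0).const_mul x).add ((hasDerivAt_cos 0).const_mul y))
  convert! h using 1
  simp [Om]; ring

theorem rad_rot (x y s : ℝ) :
    rad (x * cos s - y * sin s) (x * sin s + y * cos s) = rad x y := by
  unfold rad
  congr 1
  linear_combination (x ^ 2 + y ^ 2) * sin_sq_add_cos_sq s

theorem Om_radial {f : F3} (hf : Smooth3 f) (hr : RadialF f) : Om f = 0 := by
  funext t x y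
  have h := hasDerivAt_rot hf t x y
  have e : (fun s => f t (x * cos s - y * sin s) (x * sin s + y * cos s)) = fun _ => f t x y := by
    funext s; exact hr _ _ _ _ _ (rad_rot x y s)
  rw [e] at h
  exact h.unique (hasDerivAt_const _ _)

theorem rad_ne_zero {q : ℝ × ℝ} (hq : q ∈ ({0}ᶜ : Set (ℝ × ℝ))) : rad q.1 q.2 ≠ 0 := by
  intro h
  apply hq
  rw [rad, Real.sqrt_eq_zero (by positivity)] at h
  have h1 : q.1 = 0 := by nlinarith [sq_nonneg q.1, sq_nonneg q.2]
  have h2 : q.2 = 0 := by nlinarith [sq_nonneg q.1, sq_nonneg q.2]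
  exact Prod.ext h1 h2

/-- `Ω` acts on the components of a radial vector field as the generator of rotations. The
formula holds off the origin by differentiating along the rotation flow, and at the origin by
continuity. -/
theorem Om_vector {w1 w2 : F3} (h1 : Smooth3 w1) (h2 : Smooth3 w2) {W : ℝ → ℝ → ℝ}
    (hW : ∀ t x y, rad x y ≠ 0 →
      w1 t x y = W t (rad x y) * x / rad x y ∧ w2 t x y = W t (rad x y) * y / rad x y) :
    Om w1 = -w2 ∧ Om w2 = w1 := by
  have key : ∀ t, ∀ q ∈ ({0}ᶜ : Set (ℝ × ℝ)),
      Om w1 t q.1 q.2 = -w2 t q.1 q.2 ∧ Om w2 t q.1 q.2 = w1 t q.1 q.2 := by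
    rintro t ⟨x, y⟩ hq
    have hr := rad_ne_zero hq
    have hr' := fun s => (rad_rot x y s).trans_ne hr
    obtain ⟨e1, e2⟩ := hW t x y hr
    have k1 := hasDerivAt_rot h1 t x y
    have k2 := hasDerivAt_rot h2 t x y
    have r1 : (fun s => w1 t (x * cos s - y * sin s) (x * sin s + y * cos s))
        = fun s => w1 t x y * cos s - w2 t x y * sin s := by
      funext s
      rw [(hW t _ _ (hr' s)).1, rad_rot, e1, e2]; ring
    have r2 : (fun s => w2 t (x * cos s - y * sin s) (x * sin s + y * cos s))
        = fun s => w1 t x y * sin s + w2 t x y * cos s := by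
      funext s
      rw [(hW t _ _ (hr' s)).2, rad_rot, e1, e2]; ring
    rw [r1] at k1
    rw [r2] at k2
    constructor
    · have := k1.unique (((hasDerivAt_cos 0).const_mul _).sub ((hasDerivAt_sin 0).const_mul _))
      simpa using this
    · have := k2.unique (((hasDerivAt_sin 0).const_mul _).add ((hasDerivAt_cos 0).const_mul _))
      simpa using this
  have hd : Dense ({0}ᶜ : Set (ℝ × ℝ)) := dense_compl_singleton 0
  constructor
  · funext t x y
    exact congrFun (Continuous.ext_on hd (h1.Om.continuous t) (h2.neg.continuous t)
      fun q hq => (key t q hq).1) (x, y)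
  · funext t x y
    exact congrFun (Continuous.ext_on hd (h2.Om.continuous t) (h1.continuous t)
      fun q hq => (key t q hq).2) (x, y)

/-! ### One-dimensional Sobolev inequalities -/

theorem sq_sub_sq_le {g g' : ℝ → ℝ} (hg : ∀ s, HasDerivAt g (g' s) s) (hc' : Continuous g')
    {a b : ℝ} (hab : a ≤ b) :
    |g b ^ 2 - g a ^ 2| ≤ ∫ s in a..b, (g s ^ 2 + g' s ^ 2) := by
  have hc : Continuous g := continuous_iff_continuousAt.2 fun s => (hg s).continuousAt
  have e : ∫ s in a..b, 2 * g s * g' s = g b ^ 2 - g a ^ 2 := by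
    apply intervalIntegral.integral_eq_sub_of_hasDerivAt
    · intro s _
      convert! (hg s).pow 2 using 1
      simp
    · exact Continuous.intervalIntegrable (by fun_prop) _ _
  rw [← e]
  refine (intervalIntegral.abs_integral_le_integral_abs hab).trans ?_
  refine intervalIntegral.integral_mono_on hab (Continuous.intervalIntegrable (by fun_prop) _ _)
    (Continuous.intervalIntegrable (by fun_prop) _ _) fun s _ => ?_
  rw [abs_le]
  constructor <;> nlinarith [sq_nonneg (g s - g' s), sq_nonneg (g s + g' s)]

theorem sq_le_of_zero {g g' : ℝ → ℝ} (hg : ∀ s, HasDerivAt g (g' s) s) (hc' : Continuous g')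
    {a b : ℝ} (hab : a ≤ b) (hb : g b = 0) :
    g a ^ 2 ≤ ∫ s in a..b, (g s ^ 2 + g' s ^ 2) := by
  have h := (abs_le.1 (sq_sub_sq_le hg hc' hab)).1
  rw [hb] at h
  linarith

/-- Sobolev inequality on the circle: compare `g φ` with every other value and average. -/
theorem sq_le_circle {g g' : ℝ → ℝ} (hg : ∀ s, HasDerivAt g (g' s) s) (hc' : Continuous g')
    {φ : ℝ} (h1 : -π ≤ φ) (h2 : φ ≤ π) :
    g φ ^ 2 ≤ 2 * ∫ s in (-π)..π, (g s ^ 2 + g' s ^ 2) := by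
  have hc : Continuous g := continuous_iff_continuousAt.2 fun s => (hg s).continuousAt
  set J := ∫ s in (-π)..π, (g s ^ 2 + g' s ^ 2) with hJ
  have hπ : -π ≤ π := by linarith [pi_pos]
  have hint : IntervalIntegrable (fun s => g s ^ 2 + g' s ^ 2) volume (-π) π :=
    Continuous.intervalIntegrable (by fun_prop) _ _
  have mono : ∀ a b, -π ≤ a → a ≤ b → b ≤ π → ∫ s in a..b, (g s ^ 2 + g' s ^ 2) ≤ J := by
    intro a b ha hab hb
    exact intervalIntegral.integral_mono_interval ha hab hb
      (Filter.Eventually.of_forall fun s => by positivity) hint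
  have key : ∀ c ∈ Icc (-π) π, g φ ^ 2 - J ≤ g c ^ 2 := by
    rintro c ⟨hc1, hc2⟩
    rcases le_total φ c with h | h
    · have := (abs_le.1 (sq_sub_sq_le hg hc' h)).1
      linarith [mono φ c h1 h hc2]
    · have := (abs_le.1 (sq_sub_sq_le hg hc' h)).2
      linarith [mono c φ hc1 h h2]
  have h3 : ∫ c in (-π)..π, (g φ ^ 2 - J) ≤ ∫ c in (-π)..π, g c ^ 2 :=
    intervalIntegral.integral_mono_on hπ (by simp)
      (Continuous.intervalIntegrable (by fun_prop) _ _) key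
  have h4 : ∫ c in (-π)..π, g c ^ 2 ≤ J :=
    intervalIntegral.integral_mono_on hπ (Continuous.intervalIntegrable (by fun_prop) _ _)
      hint fun s _ => by nlinarith [sq_nonneg (g' s)]
  have hJ0 : 0 ≤ J := intervalIntegral.integral_nonneg hπ fun s _ => by positivity
  rw [intervalIntegral.integral_const, smul_eq_mul] at h3
  have hp := pi_gt_three
  by_contra hcon
  push Not at hcon
  nlinarith

/-! ### Planar integrals over rectangles and annuli -/

theorem rect_le {G : ℝ × ℝ → ℝ} (hG : Continuous G) (h0 : ∀ q, 0 ≤ G q)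
    (hs : HasCompactSupport G) {a b a' b' : ℝ} (h : a ≤ b) (h' : a' ≤ b') :
    ∫ x in a..b, ∫ y in a'..b', G (x, y) ≤ ∫ q, G q := by
  have hi : Integrable G := hG.integrable_of_hasCompactSupport hs
  simp only [intervalIntegral.integral_of_le h, intervalIntegral.integral_of_le h']
  rw [← setIntegral_prod (f := G) (hf := hi.integrableOn)]
  exact setIntegral_le_integral hi (Filter.Eventually.of_forall h0)

theorem polar_le {G : ℝ × ℝ → ℝ} (hG : Continuous G) (h0 : ∀ q, 0 ≤ G q) {B₀ : ℝ}
    (hs : ∀ x y, B₀ < rad x y → G (x, y) = 0) {a b : ℝ} (ha : 0 ≤ a) (h : a ≤ b) :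
    ∫ r in a..b, r * ∫ s in (-π)..π, G (r * cos s, r * sin s) ≤ ∫ q, G q := by
  have hπ : -π ≤ π := by linarith [pi_pos]
  set H : ℝ × ℝ → ℝ := fun p => p.1 * G (p.1 * cos p.2, p.1 * sin p.2) with hH
  have hHc : Continuous H := by fun_prop
  have hHi : IntegrableOn H (Ioi 0 ×ˢ Ioo (-π) π) := by
    have hK : IntegrableOn H (Icc 0 B₀ ×ˢ Icc (-π) π) :=
      hHc.continuousOn.integrableOn_compact (isCompact_Icc.prod isCompact_Icc)
    refine hK.of_forall_sdiff_eq_zero (measurableSet_Ioi.prod measurableSet_Ioo) ?_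
    rintro ⟨r, s⟩ ⟨⟨hr, hs1⟩, hn⟩
    have hr0 : (0 : ℝ) < r := hr
    have hB : B₀ < r := by
      by_contra hcon
      push Not at hcon
      exact hn ⟨⟨hr0.le, hcon⟩, Ioo_subset_Icc_self hs1⟩
    have : rad (r * cos s) (r * sin s) = r := by
      rw [rad, show (r * cos s) ^ 2 + (r * sin s) ^ 2 = r ^ 2 by
        linear_combination r ^ 2 * sin_sq_add_cos_sq s, Real.sqrt_sq hr0.le]
    simp only [hH]
    rw [hs _ _ (by rw [this]; exact hB), mul_zero]
  have hsub : Ioc a b ×ˢ Ioo (-π) π ⊆ Ioi (0 : ℝ) ×ˢ Ioo (-π) π :=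
    prod_mono (fun r hr => ha.trans_lt hr.1) subset_rfl
  have e : ∫ q, G q = ∫ p in Ioi 0 ×ˢ Ioo (-π) π, H p := by
    rw [← integral_comp_polarCoord_symm]; rfl
  have e2 : ∫ r in a..b, r * ∫ s in (-π)..π, G (r * cos s, r * sin s)
      = ∫ p in Ioc a b ×ˢ Ioo (-π) π, H p := by
    simp only [intervalIntegral.integral_of_le h, intervalIntegral.integral_of_le hπ,
      integral_Ioc_eq_integral_Ioo, ← integral_const_mul]
    rw [← integral_Ioc_eq_integral_Ioo]
    exact (setIntegral_prod (f := H) (hf := hHi.mono_set hsub)).symm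
  rw [e, e2]
  refine setIntegral_mono_set hHi ?_ (Filter.Eventually.of_forall hsub)
  refine (ae_restrict_iff' (measurableSet_Ioi.prod measurableSet_Ioo)).2
    (Filter.Eventually.of_forall fun p hp => ?_)
  exact mul_nonneg (le_of_lt hp.1) (h0 _)

/-! ### Weighted and unweighted Sobolev inequalities in the plane -/

/-- The square of the time slice `h(t, ·)`, as a function on the plane. -/
def sqf (h : F3) (t : ℝ) : ℝ × ℝ → ℝ := fun q => (h t q.1 q.2) ^ 2

/-- `h` is smooth and its slice at time `t` is compactly supported. -/
def CS (t : ℝ) (h : F3) : Prop :=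
  Smooth3 h ∧ HasCompactSupport (fun q : ℝ × ℝ => h t q.1 q.2)

theorem CS.cont {t : ℝ} {h : F3} (hh : CS t h) : Continuous (sqf h t) :=
  (hh.1.continuous t).pow 2

theorem CS.supp {t : ℝ} {h : F3} (hh : CS t h) : HasCompactSupport (sqf h t) :=
  hh.2.comp_left (g := fun z : ℝ => z ^ 2) (by simp)

theorem CS.int {t : ℝ} {h : F3} (hh : CS t h) : Integrable (sqf h t) :=
  hh.cont.integrable_of_hasCompactSupport hh.supp

theorem exists_radius {G : ℝ × ℝ → ℝ} (hG : HasCompactSupport G) :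
    ∃ B, ∀ x y, B < rad x y → G (x, y) = 0 := by
  obtain ⟨M, hM⟩ := hG.isCompact.isBounded.subset_closedBall 0
  refine ⟨2 * M, fun x y h => ?_⟩
  by_contra hne
  have h1 := hM (subset_tsupport G hne)
  rw [mem_closedBall_zero_iff, Prod.norm_def, max_le_iff, Real.norm_eq_abs,
    Real.norm_eq_abs] at h1
  have h2 : rad x y ≤ |x| + |y| := by
    rw [rad, Real.sqrt_le_left (by positivity)]
    nlinarith [sq_abs x, sq_abs y, abs_nonneg x, abs_nonneg y]
  linarith [h1.1, h1.2]

theorem abs_le_rad_left (x y : ℝ) : |x| ≤ rad x y := by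
  rw [rad]; exact Real.abs_le_sqrt (by nlinarith [sq_nonneg y])

theorem abs_le_rad_right (x y : ℝ) : |y| ≤ rad x y := by
  rw [rad]; exact Real.abs_le_sqrt (by nlinarith [sq_nonneg x])

theorem sobolev_plane {t : ℝ} {h : F3} (h0 : CS t h) (hx : CS t (px h)) (hy : CS t (py h))
    (hxy : CS t (py (px h))) (x y : ℝ) :
    (h t x y) ^ 2 ≤ (∫ q, sqf h t q) + (∫ q, sqf (px h) t q) + (∫ q, sqf (py h) t q)
      + ∫ q, sqf (py (px h)) t q := by
  obtain ⟨B₁, hB₁⟩ := exists_radius h0.2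
  obtain ⟨B₂, hB₂⟩ := exists_radius hx.2
  set B := max (max |x| |y|) (max B₁ B₂) + 1 with hB
  have b1 : |x| < B := by
    have := (le_max_left |x| |y|).trans (le_max_left _ (max B₁ B₂)); linarith
  have b2 : |y| < B := by
    have := (le_max_right |x| |y|).trans (le_max_left _ (max B₁ B₂)); linarith
  have b3 : B₁ < B := by
    have := (le_max_left B₁ B₂).trans (le_max_right (max |x| |y|) _); linarith
  have b4 : B₂ < B := by
    have := (le_max_right B₁ B₂).trans (le_max_right (max |x| |y|) _); linarith
  have hxB : x ≤ B := (le_abs_self x).trans b1.le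
  have hyB : y ≤ B := (le_abs_self y).trans b2.le
  have z1 : h t B y = 0 :=
    hB₁ _ _ (b3.trans_le ((le_abs_self B).trans (abs_le_rad_left _ _)))
  have z2 : ∀ s, h t s B = 0 := fun s =>
    hB₁ _ _ (b3.trans_le ((le_abs_self B).trans (abs_le_rad_right _ _)))
  have z3 : ∀ s, px h t s B = 0 := fun s =>
    hB₂ _ _ (b4.trans_le ((le_abs_self B).trans (abs_le_rad_right _ _)))
  set G : ℝ × ℝ → ℝ := fun q => sqf h t q + sqf (px h) t q + sqf (py h) t q
    + sqf (py (px h)) t q with hG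
  have hGc : Continuous G := ((h0.cont.add hx.cont).add hy.cont).add hxy.cont
  have hGs : HasCompactSupport G := ((h0.supp.add hx.supp).add hy.supp).add hxy.supp
  have hGi : ∫ q, G q = (∫ q, sqf h t q) + (∫ q, sqf (px h) t q) + (∫ q, sqf (py h) t q)
      + ∫ q, sqf (py (px h)) t q := by
    change ∫ q, (sqf h t + sqf (px h) t + sqf (py h) t + sqf (py (px h)) t) q = _
    rw [integral_add' ((h0.int.add hx.int).add hy.int) hxy.int,
      integral_add' (h0.int.add hx.int) hy.int, integral_add' h0.int hx.int]
  have hG0 : ∀ q, 0 ≤ G q := fun q => by simp only [hG, sqf]; positivity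
  rw [← hGi]
  have cx : ∀ {f : F3}, Smooth3 f → Continuous fun s => f t s y := fun hf =>
    (hf.continuous t).comp (by fun_prop : Continuous fun s : ℝ => (s, y))
  have cy : ∀ {f : F3}, Smooth3 f → ∀ s, Continuous fun s' => f t s s' := fun hf s =>
    (hf.continuous t).comp (by fun_prop : Continuous fun s' : ℝ => (s, s'))
  refine (sq_le_of_zero (fun s => h0.1.hx t s y) (cx hx.1) hxB z1).trans ?_
  refine le_trans ?_ (rect_le hGc hG0 hGs hxB hyB)
  have k1 := cx h0.1
  have k2 := cx hx.1
  refine intervalIntegral.integral_mono_on hxB (Continuous.intervalIntegrable (by fun_prop) _ _)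
    (Continuous.intervalIntegrable ?_ _ _) fun s _ => ?_
  · exact intervalIntegral.continuous_parametric_intervalIntegral_of_continuous' (by fun_prop) _ _
  · have i1 := sq_le_of_zero (fun s' => h0.1.hy t s s') (cy hy.1 s) hyB (z2 s)
    have i2 := sq_le_of_zero (fun s' => hx.1.hy t s s') (cy hxy.1 s) hyB (z3 s)
    have m0 := cy h0.1 s
    have m1 := cy hx.1 s
    have m2 := cy hy.1 s
    have m3 := cy hxy.1 s
    refine (add_le_add i1 i2).trans (le_of_eq ?_)
    rw [← intervalIntegral.integral_add (Continuous.intervalIntegrable (by fun_prop) _ _)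
      (Continuous.intervalIntegrable (by fun_prop) _ _)]
    congr 1
    funext s'
    simp only [hG, sqf]; ring

theorem exists_polar (x y : ℝ) :
    ∃ φ, -π ≤ φ ∧ φ ≤ π ∧ x = rad x y * cos φ ∧ y = rad x y * sin φ := by
  have e : ‖(⟨x, y⟩ : ℂ)‖ = rad x y := by
    rw [Complex.norm_def, Complex.normSq_mk, rad]; congr 1; ring
  refine ⟨Complex.arg ⟨x, y⟩, (Complex.neg_pi_lt_arg _).le, Complex.arg_le_pi _, ?_, ?_⟩
  · rw [← e, Complex.norm_mul_cos_arg]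
  · rw [← e, Complex.norm_mul_sin_arg]

/-- The radial decay estimate. In polar coordinates, `F(r,φ)² ≤ ∫_r^∞ (F² + F_r²) dρ` along the ray,
and the circle inequality at each radius turns the values on the ray into angular integrals; the
factor `r ≤ ρ` supplies the Jacobian. -/
theorem sobolev_radial {t : ℝ} {h : F3} (h0 : CS t h) (hx : CS t (px h)) (hy : CS t (py h))
    (hO : CS t (Om h)) (hOx : CS t (px (Om h))) (hOy : CS t (py (Om h))) (x y : ℝ) :
    rad x y * (h t x y) ^ 2 ≤ 2 * ((∫ q, sqf h t q) + (∫ q, sqf (px h) t q)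
      + (∫ q, sqf (py h) t q) + (∫ q, sqf (Om h) t q) + (∫ q, sqf (px (Om h)) t q)
      + ∫ q, sqf (py (Om h)) t q) := by
  obtain ⟨φ, hφ1, hφ2, ex, ey⟩ := exists_polar x y
  set R := rad x y with hR
  have hR0 : 0 ≤ R := Real.sqrt_nonneg _
  set G : ℝ × ℝ → ℝ := fun q => sqf h t q + sqf (px h) t q + sqf (py h) t q
    + sqf (Om h) t q + sqf (px (Om h)) t q + sqf (py (Om h)) t q with hG
  have hGc : Continuous G :=
    ((((h0.cont.add hx.cont).add hy.cont).add hO.cont).add hOx.cont).add hOy.cont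
  have hGs : HasCompactSupport G :=
    ((((h0.supp.add hx.supp).add hy.supp).add hO.supp).add hOx.supp).add hOy.supp
  have hGi : ∫ q, G q = (∫ q, sqf h t q) + (∫ q, sqf (px h) t q)
      + (∫ q, sqf (py h) t q) + (∫ q, sqf (Om h) t q) + (∫ q, sqf (px (Om h)) t q)
      + ∫ q, sqf (py (Om h)) t q := by
    change ∫ q, (sqf h t + sqf (px h) t + sqf (py h) t + sqf (Om h) t + sqf (px (Om h)) t
      + sqf (py (Om h)) t) q = _
    rw [integral_add' ((((h0.int.add hx.int).add hy.int).add hO.int).add hOx.int) hOy.int,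
      integral_add' (((h0.int.add hx.int).add hy.int).add hO.int) hOx.int,
      integral_add' ((h0.int.add hx.int).add hy.int) hO.int,
      integral_add' (h0.int.add hx.int) hy.int, integral_add' h0.int hx.int]
  have hG0 : ∀ q, 0 ≤ G q := fun q => by simp only [hG, sqf]; positivity
  rw [← hGi]
  obtain ⟨B₀, hB₀⟩ := exists_radius hGs
  obtain ⟨B₁, hB₁⟩ := exists_radius h0.2
  set B := max R B₁ + 1 with hB
  have hRB : R ≤ B := by linarith [le_max_left R B₁]
  have hB1 : B₁ < B := by linarith [le_max_right R B₁]
  -- continuity of `f` read in polar coordinates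
  have cp : ∀ {f : F3}, Smooth3 f →
      Continuous fun p : ℝ × ℝ => f t (p.1 * cos p.2) (p.1 * sin p.2) := fun hf =>
    (hf.continuous t).comp
      (by fun_prop : Continuous fun p : ℝ × ℝ => (p.1 * cos p.2, p.1 * sin p.2))
  have cr : ∀ {f : F3}, Smooth3 f → ∀ s,
      Continuous fun r => f t (r * cos s) (r * sin s) := fun hf s =>
    (cp hf).comp (by fun_prop : Continuous fun r : ℝ => (r, s))
  have ca : ∀ {f : F3}, Smooth3 f → ∀ r,
      Continuous fun s => f t (r * cos s) (r * sin s) := fun hf r =>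
    (cp hf).comp (by fun_prop : Continuous fun s : ℝ => (r, s))
  -- the radial derivative
  have dr : ∀ r s, HasDerivAt (fun r => h t (r * cos s) (r * sin s))
      (cos s * px h t (r * cos s) (r * sin s) + sin s * py h t (r * cos s) (r * sin s)) r := by
    intro r s
    have := h0.1.chain (hasDerivAt_const r t) ((hasDerivAt_id r).mul_const (cos s))
      ((hasDerivAt_id r).mul_const (sin s))
    simpa using this
  -- the angular derivative of any smooth function is `Ω` of it
  have da : ∀ {f : F3}, Smooth3 f → ∀ r s, HasDerivAt (fun s => f t (r * cos s) (r * sin s))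
      (Om f t (r * cos s) (r * sin s)) s := by
    intro f hf r s
    have := hf.chain (hasDerivAt_const s t) ((hasDerivAt_cos s).const_mul r)
      ((hasDerivAt_sin s).const_mul r)
    convert! this using 1
    simp only [Om]; ring
  -- the mixed derivative, by commuting `Ω` with the spatial derivatives
  have dar : ∀ r s, HasDerivAt
      (fun s => cos s * px h t (r * cos s) (r * sin s) + sin s * py h t (r * cos s) (r * sin s))
      (cos s * px (Om h) t (r * cos s) (r * sin s)
        + sin s * py (Om h) t (r * cos s) (r * sin s)) s := by
    intro r s
    have := ((hasDerivAt_cos s).mul (da hx.1 r s)).add ((hasDerivAt_sin s).mul (da hy.1 r s))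
    convert! this using 1
    rw [Om_px h0.1, Om_py h0.1]
    simp only [Pi.add_apply, Pi.neg_apply]; ring
  have zB : h t (B * cos φ) (B * sin φ) = 0 := by
    apply hB₁
    have hB0 : 0 ≤ B := hR0.trans hRB
    rw [rad, show (B * cos φ) ^ 2 + (B * sin φ) ^ 2 = B ^ 2 by
      linear_combination B ^ 2 * sin_sq_add_cos_sq φ, Real.sqrt_sq hB0]
    exact hB1
  have q0 := cr h0.1 φ
  have q1 := cr hx.1 φ
  have q2 := cr hy.1 φ
  have step := sq_le_of_zero (fun r => dr r φ) (by fun_prop) hRB zB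
  rw [← ex, ← ey] at step
  calc R * h t x y ^ 2
      ≤ R * ∫ r in R..B, (h t (r * cos φ) (r * sin φ) ^ 2
        + (cos φ * px h t (r * cos φ) (r * sin φ)
          + sin φ * py h t (r * cos φ) (r * sin φ)) ^ 2) := by gcongr
    _ = ∫ r in R..B, R * (h t (r * cos φ) (r * sin φ) ^ 2
        + (cos φ * px h t (r * cos φ) (r * sin φ)
          + sin φ * py h t (r * cos φ) (r * sin φ)) ^ 2) := by
        rw [intervalIntegral.integral_const_mul]
    _ ≤ ∫ r in R..B, 2 * (r * ∫ s in (-π)..π, G (r * cos s, r * sin s)) := by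
        refine intervalIntegral.integral_mono_on hRB
          (Continuous.intervalIntegrable (continuous_const.mul ((q0.pow 2).add
            (((continuous_const.mul q1).add (continuous_const.mul q2)).pow 2))) _ _)
          (Continuous.intervalIntegrable ?_ _ _) fun r hr => ?_
        · have := intervalIntegral.continuous_parametric_intervalIntegral_of_continuous'
            (μ := volume) (f := fun r s => G (r * cos s, r * sin s)) (by fun_prop) (-π) π
          fun_prop
        · have m0 := ca h0.1 r
          have m1 := ca hx.1 r
          have m2 := ca hy.1 r
          have m3 := ca hO.1 r
          have m4 := ca hOx.1 r
          have m5 := ca hOy.1 r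
          have n1 : Continuous fun s => h t (r * cos s) (r * sin s) ^ 2
              + Om h t (r * cos s) (r * sin s) ^ 2 := (m0.pow 2).add (m3.pow 2)
          have n2 : Continuous fun s =>
              (cos s * px h t (r * cos s) (r * sin s) + sin s * py h t (r * cos s) (r * sin s)) ^ 2
              + (cos s * px (Om h) t (r * cos s) (r * sin s)
                + sin s * py (Om h) t (r * cos s) (r * sin s)) ^ 2 :=
            ((((continuous_cos.mul m1).add (continuous_sin.mul m2)).pow 2).add
            (((continuous_cos.mul m4).add (continuous_sin.mul m5)).pow 2))
          have i1 := sq_le_circle (fun s => da h0.1 r s) m3 hφ1 hφ2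
          have i2 := sq_le_circle (fun s => dar r s) (by fun_prop) hφ1 hφ2
          have hr0 : 0 ≤ r := hR0.trans hr.1
          have cs : ∀ s a b : ℝ, (cos s * a + sin s * b) ^ 2 ≤ a ^ 2 + b ^ 2 := fun s a b => by
            have e := sin_sq_add_cos_sq s
            have : a ^ 2 + b ^ 2 - (cos s * a + sin s * b) ^ 2 = (sin s * a - cos s * b) ^ 2 := by
              linear_combination (-(a ^ 2 + b ^ 2)) * e
            nlinarith [sq_nonneg (sin s * a - cos s * b)]
          have i3 := add_le_add i1 i2
          rw [← mul_add, ← intervalIntegral.integral_add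
            (n1.intervalIntegrable _ _) (n2.intervalIntegrable _ _)] at i3
          have i4 : _ ≤ ∫ s in (-π)..π, G (r * cos s, r * sin s) :=
            intervalIntegral.integral_mono_on (by linarith [pi_pos])
              ((n1.add n2).intervalIntegrable _ _)
              (Continuous.intervalIntegrable (by fun_prop) _ _) fun s _ => by
                have a1 := cs s (px h t (r * cos s) (r * sin s)) (py h t (r * cos s) (r * sin s))
                have a2 := cs s (px (Om h) t (r * cos s) (r * sin s))
                  (py (Om h) t (r * cos s) (r * sin s))
                have := add_le_add (add_le_add_right a1 (h t (r * cos s) (r * sin s) ^ 2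
                  + Om h t (r * cos s) (r * sin s) ^ 2)) a2
                refine le_trans (le_of_eq ?_) (this.trans (le_of_eq ?_))
                · exact (add_assoc _ _ _).symm
                · simp only [hG, sqf]; ring
          have i5 := i3.trans (mul_le_mul_of_nonneg_left i4 zero_le_two)
          have i6 := mul_le_mul hr.1 i5 (by positivity) hr0
          exact i6.trans (le_of_eq (by ring))
    _ = 2 * ∫ r in R..B, r * ∫ s in (-π)..π, G (r * cos s, r * sin s) := by
        rw [intervalIntegral.integral_const_mul]
    _ ≤ 2 * ∫ q, G q := by
        have := polar_le hGc hG0 hB₀ hR0 hRB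
        linarith

/-! ### Energy bounds for `Γ^γ Ω Γ^β` -/

/-- `h` is smooth, compactly supported at time `t`, and `‖h(t)‖² ≤ K * E`. -/
def Good (E t K : ℝ) (h : F3) : Prop := CS t h ∧ ∫ q, sqf h t q ≤ K * E

theorem Good.mono {E t K K' : ℝ} {h : F3} (hE : 0 ≤ E) (hh : Good E t K h) (hK : K ≤ K') :
    Good E t K' h :=
  ⟨hh.1, hh.2.trans (mul_le_mul_of_nonneg_right hK hE)⟩

theorem Good.neg {E t K : ℝ} {h : F3} (hh : Good E t K h) : Good E t K (-h) := by
  refine ⟨⟨hh.1.1.neg, hh.1.2.neg⟩, ?_⟩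
  have : sqf (-h) t = sqf h t := by funext q; simp [sqf]
  rw [this]; exact hh.2

theorem Good.add {E t K K' : ℝ} {h k : F3} (hh : Good E t K h) (hk : Good E t K' k) :
    Good E t (2 * K + 2 * K') (h + k) := by
  have hs : CS t (h + k) := ⟨hh.1.1.add hk.1.1, hh.1.2.add hk.1.2⟩
  refine ⟨hs, ?_⟩
  have e : ∫ q, sqf (h + k) t q ≤ ∫ q, (2 * sqf h t q + 2 * sqf k t q) := by
    refine integral_mono hs.int ((hh.1.int.const_mul 2).add (hk.1.int.const_mul 2)) fun q => ?_
    simp only [sqf, Pi.add_apply]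
    nlinarith [sq_nonneg (h t q.1 q.2 - k t q.1 q.2)]
  rw [integral_add (hh.1.int.const_mul 2) (hk.1.int.const_mul 2), integral_const_mul,
    integral_const_mul] at e
  linarith [hh.2, hk.2]

/-- Moving `Ω` inwards past the letters of `β`: each commutator `[Ω, Γ_a]` is `0` or `±∂_j`, so it
costs one further term of the same order. -/
theorem good_rot {E t : ℝ} {u : F3} {n : ℕ} (hE : 0 ≤ E) (hu : Smooth3 u)
    (h0 : ∀ γ : List (Fin 4), γ.length ≤ n → Good E t 1 (GIter γ u))
    (h1 : ∀ γ : List (Fin 4), γ.length ≤ n → Good E t 1 (GIter γ (Om u))) :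
    ∀ β γ : List (Fin 4), γ.length + β.length ≤ n →
      Good E t (4 ^ β.length) (GIter γ (Om (GIter β u))) := by
  intro β
  induction β with
  | nil => intro γ hγ; simpa [GIter] using h1 γ (by simpa using hγ)
  | cons a l ih =>
    intro γ hγ
    rw [List.length_cons] at hγ
    have hl := hu.GIter l
    have g0 : Good E t (4 ^ l.length) (GIter γ (GammaF a (Om (GIter l u)))) := by
      have := ih (γ ++ [a]) (by rw [List.length_append, List.length_singleton]; omega)
      rwa [GIter_append] at this
    have g1 : ∀ b : Fin 4, Good E t 1 (GIter γ (GammaF b (GIter l u))) := by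
      intro b
      have := h0 (γ ++ b :: l) (by rw [List.length_append, List.length_cons]; omega)
      rwa [GIter_append] at this
    have hp : (1 : ℝ) ≤ 4 ^ l.length := one_le_pow₀ (by norm_num)
    have hK1 : (4 : ℝ) ^ l.length ≤ 4 ^ (a :: l).length := by
      rw [List.length_cons, pow_succ]; linarith
    have hK2 : 2 * (4 : ℝ) ^ l.length + 2 * 1 ≤ 4 ^ (a :: l).length := by
      rw [List.length_cons, pow_succ]; linarith
    change Good E t _ (GIter γ (Om (GammaF a (GIter l u))))
    fin_cases a
    · change Good E t _ (GIter γ (Om (pt (GIter l u))))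
      rw [Om_pt hl]
      exact g0.mono hE hK1
    · change Good E t _ (GIter γ (Om (px (GIter l u))))
      rw [Om_px hl, GIter_add hl.Om.px hl.py.neg, GIter_neg hl.py]
      exact (g0.add (g1 2).neg).mono hE hK2
    · change Good E t _ (GIter γ (Om (py (GIter l u))))
      rw [Om_py hl, GIter_add hl.Om.py hl.px]
      exact (g0.add (g1 1)).mono hE hK2
    · change Good E t _ (GIter γ (Om (Xf (GIter l u))))
      rw [Om_Xf hl]
      exact g0.mono hE hK1

/-- The weighted bound for one component. The constant `16` comes from `4` terms in
`sobolev_plane`, and `2 * 3` terms without and `2 * 3` terms with `Ω` in `sobolev_radial`. -/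
theorem pointwise_bound {E t : ℝ} {u : F3} (α : List (Fin 4)) (hE : 0 ≤ E) (hu : Smooth3 u)
    (h0 : ∀ γ : List (Fin 4), γ.length ≤ α.length + 2 → Good E t 1 (GIter γ u))
    (h1 : ∀ γ : List (Fin 4), γ.length ≤ α.length + 2 → Good E t 1 (GIter γ (Om u)))
    (x y : ℝ) :
    Real.sqrt (1 + rad x y) * |GIter α u t x y|
      ≤ Real.sqrt (16 * 4 ^ α.length) * Real.sqrt E := by
  have hr := good_rot hE hu h0 h1 α
  have a0 := h0 α (by omega)
  have ax : Good E t 1 (px (GIter α u)) := h0 (1 :: α) (by simp)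
  have ay : Good E t 1 (py (GIter α u)) := h0 (2 :: α) (by simp)
  have axy : Good E t 1 (py (px (GIter α u))) := h0 (2 :: 1 :: α) (by simp)
  have aO : Good E t (4 ^ α.length) (Om (GIter α u)) := hr [] (by simp)
  have aOx : Good E t (4 ^ α.length) (px (Om (GIter α u))) :=
    hr [1] (by rw [List.length_singleton]; omega)
  have aOy : Good E t (4 ^ α.length) (py (Om (GIter α u))) :=
    hr [2] (by rw [List.length_singleton]; omega)
  have s1 := sobolev_plane a0.1 ax.1 ay.1 axy.1 x y
  have s2 := sobolev_radial a0.1 ax.1 ay.1 aO.1 aOx.1 aOy.1 x y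
  have hp : E ≤ 4 ^ α.length * E := le_mul_of_one_le_left hE (one_le_pow₀ (by norm_num))
  have hR : 0 ≤ rad x y := Real.sqrt_nonneg _
  have key : (1 + rad x y) * (GIter α u t x y) ^ 2 ≤ 16 * 4 ^ α.length * E := by
    have := a0.2
    have := ax.2
    have := ay.2
    have := axy.2
    have := aO.2
    have := aOx.2
    have := aOy.2
    linarith
  rw [← Real.sqrt_sq_eq_abs, ← Real.sqrt_mul (by positivity), ← Real.sqrt_mul (by positivity)]
  exact Real.sqrt_le_sqrt key

theorem L2n_sq (h : F3) (t : ℝ) : (L2n fun x y => h t x y) ^ 2 = ∫ q, sqf h t q :=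
  Real.sq_sqrt (integral_nonneg fun q => sq_nonneg _)

theorem En_nonneg (θd w1 w2 zd : F3) (n : ℕ) (t : ℝ) : 0 ≤ En θd w1 w2 zd n t :=
  Finset.sum_nonneg fun _ _ => Finset.sum_nonneg fun _ _ => by positivity

theorem term_le_En (θd w1 w2 zd : F3) {n : ℕ} (t : ℝ) (γ : List (Fin 4)) (hγ : γ.length ≤ n) :
    (∫ q, sqf (GIter γ θd) t q) + (∫ q, sqf (GIter γ w1) t q) + (∫ q, sqf (GIter γ w2) t q)
      + (∫ q, sqf (GIter γ zd) t q) ≤ En θd w1 w2 zd n t := by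
  simp only [← L2n_sq]
  unfold En
  refine le_trans ?_ (Finset.single_le_sum (fun _ _ => Finset.sum_nonneg fun _ _ => by positivity)
    (Finset.mem_range.2 (Nat.lt_succ_of_le hγ)))
  refine le_trans (le_of_eq ?_) (Finset.single_le_sum (fun _ _ => by positivity)
    (Finset.mem_univ γ.get))
  simp only [List.ofFn_get]

/-- **Weighted Sobolev estimate** (Lemma 2.3 (2)):
`σ^{1/2}(|Γ^αθ̇| + |Γ^αẇ| + |Γ^αż|)(t,x) ≤ C_α E_{|α|+2}(t)^{1/2}`,
with `C_α` independent of `t`, `T` and of the functions. -/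
theorem weighted_pointwise_energy_bound (α : List (Fin 4)) :
    ∃ C > 0, ∀ T : ℝ, ∀ θd w1 w2 zd : F3,
      Smooth3 θd → Smooth3 w1 → Smooth3 w2 → Smooth3 zd →
      RadialF θd → RadialF zd →
      (∃ W : ℝ → ℝ → ℝ, ContDiff ℝ (⊤ : ℕ∞) (fun q : ℝ × ℝ => W q.1 q.2) ∧
        ∀ t x y, rad x y ≠ 0 →
          w1 t x y = W t (rad x y) * x / rad x y ∧
          w2 t x y = W t (rad x y) * y / rad x y) →
      (∀ β : List (Fin 4), ∀ t ∈ Icc (0 : ℝ) T,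
        HasCompactSupport (fun q : ℝ × ℝ => GIter β θd t q.1 q.2) ∧
        HasCompactSupport (fun q : ℝ × ℝ => GIter β w1 t q.1 q.2) ∧
        HasCompactSupport (fun q : ℝ × ℝ => GIter β w2 t q.1 q.2) ∧
        HasCompactSupport (fun q : ℝ × ℝ => GIter β zd t q.1 q.2)) →
      ∀ t ∈ Icc (0 : ℝ) T, ∀ x y : ℝ,
        Real.sqrt (1 + rad x y) *
          (|GIter α θd t x y| + max (|GIter α w1 t x y|) (|GIter α w2 t x y|)
            + |GIter α zd t x y|)
          ≤ C * Real.sqrt (En θd w1 w2 zd (α.length + 2) t) := by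
  refine ⟨3 * Real.sqrt (16 * 4 ^ α.length), by positivity, ?_⟩
  intro T θd w1 w2 zd hθ h1 h2 hz rθ rz hW hcs t ht x y
  obtain ⟨W, -, hW⟩ := hW
  obtain ⟨O1, O2⟩ := Om_vector h1 h2 hW
  have Oθ := Om_radial hθ rθ
  have Oz := Om_radial hz rz
  set E := En θd w1 w2 zd (α.length + 2) t with hEdef
  have hE : 0 ≤ E := En_nonneg _ _ _ _ _ _
  have nn : ∀ (γ : List (Fin 4)) (u : F3), 0 ≤ ∫ q, sqf (GIter γ u) t q := fun γ u =>
    integral_nonneg fun q => sq_nonneg _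
  have gθ : ∀ γ : List (Fin 4), γ.length ≤ α.length + 2 → Good E t 1 (GIter γ θd) :=
    fun γ hγ => ⟨⟨hθ.GIter γ, (hcs γ t ht).1⟩, by
      linarith [term_le_En θd w1 w2 zd t γ hγ, nn γ w1, nn γ w2, nn γ zd]⟩
  have g1 : ∀ γ : List (Fin 4), γ.length ≤ α.length + 2 → Good E t 1 (GIter γ w1) :=
    fun γ hγ => ⟨⟨h1.GIter γ, (hcs γ t ht).2.1⟩, by
      linarith [term_le_En θd w1 w2 zd t γ hγ, nn γ θd, nn γ w2, nn γ zd]⟩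
  have g2 : ∀ γ : List (Fin 4), γ.length ≤ α.length + 2 → Good E t 1 (GIter γ w2) :=
    fun γ hγ => ⟨⟨h2.GIter γ, (hcs γ t ht).2.2.1⟩, by
      linarith [term_le_En θd w1 w2 zd t γ hγ, nn γ θd, nn γ w1, nn γ zd]⟩
  have gz : ∀ γ : List (Fin 4), γ.length ≤ α.length + 2 → Good E t 1 (GIter γ zd) :=
    fun γ hγ => ⟨⟨hz.GIter γ, (hcs γ t ht).2.2.2⟩, by
      linarith [term_le_En θd w1 w2 zd t γ hγ, nn γ θd, nn γ w1, nn γ w2]⟩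
  have g0 : ∀ γ : List (Fin 4), γ.length ≤ α.length + 2 → Good E t 1 (GIter γ 0) := by
    intro γ _
    rw [GIter_zero]
    refine ⟨⟨Smooth3.zero, HasCompactSupport.zero⟩, ?_⟩
    simpa [sqf] using hE
  have bθ := pointwise_bound α hE hθ gθ (by rw [Oθ]; exact g0) x y
  have bz := pointwise_bound α hE hz gz (by rw [Oz]; exact g0) x y
  have b1 := pointwise_bound α hE h1 g1
    (by rw [O1]; intro γ hγ; rw [GIter_neg h2]; exact (g2 γ hγ).neg) x y
  have b2 := pointwise_bound α hE h2 g2 (by rw [O2]; exact g1) x y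
  rcases max_choice (|GIter α w1 t x y|) (|GIter α w2 t x y|) with h | h <;> rw [h] <;> linarith

end
end

section
/- Assume g_i^{jk} ∈ ℝ for 0 ≤ i,j,k ≤ 2 with g_i^{jk} = g_i^{kj}, and Σ_{i,j,k=0}^2 g_i^{jk} p_i p_j p_k = 0 for every p = (p₀,p₁,p₂) ∈ ℝ³ satisfying p₀² = p₁² + p₂². Then there exists a constant C > 0 (depending only on the g_i^{jk}) such that for all T > 0, all f, g ∈ C^∞([0,T]×ℝ²), and all (t,x) ∈ [0,T]×ℝ² with x ≠ 0: |Σ_{i,j,k=0}^2 g_i^{jk}(∂_i f ∂²_{jk} g)(t,x)| ≤ C(|Zf(t,x)||∂²g(t,x)| + |∂f(t,x)||Z∂g(t,x)|). -/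
/-!
Write `ω = x/|x|` and let `q = (1, -ω₁, -ω₂)`, a null covector with entries of size at most `1`.
The definition of `Z` gives `∂_i f = Z_i f + q_i ∂_t f` (with `Z₀ = 0`), and, since partial
derivatives commute,
`∂_j ∂_k h = Z_j ∂_k h + q_j ∂_t ∂_k h = Z_j ∂_k h + q_j Z_k ∂_t h + q_j q_k ∂_t² h`.
Inserting both in the cubic form, every term contains a factor `Zf` or `Z∂h`, except
`∂_t f ∂_t² h Σ g_i^{jk} q_i q_j q_k`, which vanishes by the null condition. The remaining terms
are bounded with `C = 2 Σ |g_i^{jk}| + 1`. The algebra is in `null_form_bound`, and the commutation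
of derivatives in `pdi_comm`.
-/

noncomputable section

open Real MeasureTheory Set

set_option linter.unusedVariables false

/-- The standard basis of `ℝ × ℝ × ℝ`, indexed so that `pdi i` is the derivative along
`basisVec i`. -/
def basisVec : Fin 3 → ℝ × ℝ × ℝ := ![(1, 0, 0), (0, 1, 0), (0, 0, 1)]

lemma pdi_eq_fderiv (f : F3) (t x y : ℝ)
    (hf : DifferentiableAt ℝ (fun p : ℝ × ℝ × ℝ => f p.1 p.2.1 p.2.2) (t, x, y)) (i : Fin 3) :
    pdi i f t x y =
      fderiv ℝ (fun p : ℝ × ℝ × ℝ => f p.1 p.2.1 p.2.2) (t, x, y) (basisVec i) := by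
  fin_cases i
  · have hc : HasDerivAt (fun s : ℝ => ((s, x, y) : ℝ × ℝ × ℝ)) (1, 0, 0) t :=
      (hasDerivAt_id t).prodMk ((hasDerivAt_const t x).prodMk (hasDerivAt_const t y))
    exact (hf.hasFDerivAt.comp_hasDerivAt t hc).deriv
  · have hc : HasDerivAt (fun s : ℝ => ((t, s, y) : ℝ × ℝ × ℝ)) (0, 1, 0) x :=
      (hasDerivAt_const x t).prodMk ((hasDerivAt_id x).prodMk (hasDerivAt_const x y))
    exact (hf.hasFDerivAt.comp_hasDerivAt x hc).deriv
  · have hc : HasDerivAt (fun s : ℝ => ((t, x, s) : ℝ × ℝ × ℝ)) (0, 0, 1) y :=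
      (hasDerivAt_const y t).prodMk ((hasDerivAt_const y x).prodMk (hasDerivAt_id y))
    exact (hf.hasFDerivAt.comp_hasDerivAt y hc).deriv

lemma pdi_pdi_eq_fderiv (f : F3) (hf : Smooth3 f) (t x y : ℝ) (i j : Fin 3) :
    pdi i (pdi j f) t x y =
      fderiv ℝ (fderiv ℝ (fun p : ℝ × ℝ × ℝ => f p.1 p.2.1 p.2.2)) (t, x, y)
        (basisVec i) (basisVec j) := by
  unfold Smooth3 at hf
  have hd : Differentiable ℝ (fun p : ℝ × ℝ × ℝ => f p.1 p.2.1 p.2.2) :=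
    hf.differentiable (by simp)
  have hd2 : Differentiable ℝ (fderiv ℝ (fun p : ℝ × ℝ × ℝ => f p.1 p.2.1 p.2.2)) :=
    (hf.fderiv_right (m := 1) (by norm_cast)).differentiable (by simp)
  have hfun : (fun p : ℝ × ℝ × ℝ => pdi j f p.1 p.2.1 p.2.2) =
      fun p => fderiv ℝ (fun p : ℝ × ℝ × ℝ => f p.1 p.2.1 p.2.2) p (basisVec j) := by
    funext p
    exact pdi_eq_fderiv f p.1 p.2.1 p.2.2 (hd _) j
  have hder := ((hd2 (t, x, y)).hasFDerivAt.clm_apply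
    (hasFDerivAt_const (basisVec j) (t, x, y)))
  rw [pdi_eq_fderiv (pdi j f) t x y (by rw [hfun]; exact hder.differentiableAt) i, hfun,
    hder.fderiv]
  simp

lemma pdi_comm (f : F3) (hf : Smooth3 f) (t x y : ℝ) (i j : Fin 3) :
    pdi i (pdi j f) t x y = pdi j (pdi i f) t x y := by
  rw [pdi_pdi_eq_fderiv f hf, pdi_pdi_eq_fderiv f hf]
  unfold Smooth3 at hf
  exact (hf.contDiffAt.isSymmSndFDerivAt (by simp; norm_cast)) _ _

/-- The algebraic core: `a`, `B` play the roles of `∂f`, `∂²h`, and `z`, `W` those of `Zf`, `Z∂h`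
(extended by zero to the time index), for a covector `q` on which the cubic form vanishes. -/
lemma null_form_bound (g : Fin 3 → Fin 3 → Fin 3 → ℝ) (q a z : Fin 3 → ℝ)
    (B W : Fin 3 → Fin 3 → ℝ)
    (hq : ∀ i, |q i| ≤ 1) (hg : ∑ i, ∑ j, ∑ k, g i j k * q i * q j * q k = 0)
    (ha : ∀ i, a i = z i + q i * a 0) (hB : ∀ j k, B j k = W j k + q j * B 0 k)
    (hsymm : ∀ k, B 0 k = B k 0) {A β ζ w : ℝ}
    (hA : |a 0| ≤ A) (hβ : ∀ j k, |B j k| ≤ β) (hζ : ∀ i, |z i| ≤ ζ) (hw : ∀ j k, |W j k| ≤ w) :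
    |∑ i, ∑ j, ∑ k, g i j k * a i * B j k| ≤
      (2 * (∑ i, ∑ j, ∑ k, |g i j k|) + 1) * (ζ * β + A * w) := by
  have hζ0 : 0 ≤ ζ := (abs_nonneg _).trans (hζ 0)
  have hβ0 : 0 ≤ β := (abs_nonneg _).trans (hβ 0 0)
  have hA0 : 0 ≤ A := (abs_nonneg _).trans hA
  have hw0 : 0 ≤ w := (abs_nonneg _).trans (hw 0 0)
  have hdecomp : ∑ i, ∑ j, ∑ k, g i j k * a i * B j k =
      ∑ i, ∑ j, ∑ k, g i j k * (z i * B j k + a 0 * (q i * (W j k + q j * W k 0))) := by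
    rw [← sub_eq_zero]
    -- The difference is `∂_t f ∂_t² h` times the cubic form at `q`.
    calc _ = a 0 * B 0 0 * ∑ i, ∑ j, ∑ k, g i j k * q i * q j * q k := by
          simp only [Finset.mul_sum, ← Finset.sum_sub_distrib]
          refine Finset.sum_congr rfl fun i _ => Finset.sum_congr rfl fun j _ =>
            Finset.sum_congr rfl fun k _ => ?_
          have h2 : B j k = W j k + q j * (W k 0 + q k * B 0 0) := by
            rw [hB j k, hsymm k, hB k 0]
          have h1 : g i j k * a i * B j k =
              g i j k * z i * B j k + g i j k * q i * a 0 * B j k := by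
            rw [ha i]; ring
          rw [h1, h2]; ring
      _ = 0 := by rw [hg, mul_zero]
  have hterm : ∀ i j k, |z i * B j k + a 0 * (q i * (W j k + q j * W k 0))| ≤
      2 * (ζ * β + A * w) := by
    intro i j k
    have h1 : |z i * B j k| ≤ ζ * β := by
      rw [abs_mul]; exact mul_le_mul (hζ i) (hβ j k) (abs_nonneg _) hζ0
    have h2 : |q j * W k 0| ≤ 1 * w := by
      rw [abs_mul]; exact mul_le_mul (hq j) (hw k 0) (abs_nonneg _) zero_le_one
    have h3 : |W j k + q j * W k 0| ≤ 2 * w :=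
      (abs_add_le _ _).trans (by linarith [hw j k])
    have h4 : |q i * (W j k + q j * W k 0)| ≤ 1 * (2 * w) := by
      rw [abs_mul]; exact mul_le_mul (hq i) h3 (abs_nonneg _) zero_le_one
    have h5 : |a 0 * (q i * (W j k + q j * W k 0))| ≤ A * (1 * (2 * w)) := by
      rw [abs_mul]; exact mul_le_mul hA h4 (abs_nonneg _) hA0
    have h6 : 0 ≤ ζ * β := mul_nonneg hζ0 hβ0
    exact (abs_add_le _ _).trans (by linarith)
  have hsum : |∑ i, ∑ j, ∑ k, g i j k * a i * B j k| ≤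
      ∑ i, ∑ j, ∑ k, |g i j k| * (2 * (ζ * β + A * w)) := by
    rw [hdecomp]
    refine (Finset.abs_sum_le_sum_abs _ _).trans (Finset.sum_le_sum fun i _ => ?_)
    refine (Finset.abs_sum_le_sum_abs _ _).trans (Finset.sum_le_sum fun j _ => ?_)
    refine (Finset.abs_sum_le_sum_abs _ _).trans (Finset.sum_le_sum fun k _ => ?_)
    rw [abs_mul]
    exact mul_le_mul_of_nonneg_left (hterm i j k) (abs_nonneg _)
  simp only [← Finset.sum_mul] at hsum
  have h0 : 0 ≤ ζ * β + A * w := by positivity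
  linarith

/-- **First null condition pointwise estimate** (Lemma 3.1, (3.3)): if the cubic form
`Σ g_i^{jk} p_i p_j p_k` vanishes on the null cone `p₀² = p₁² + p₂²`, then
`|Σ g_i^{jk} ∂_i f ∂²_{jk} g| ≤ C(|Zf||∂²g| + |∂f||Z∂g|)`. -/
theorem null_form_estimate_cubic (g : Fin 3 → Fin 3 → Fin 3 → ℝ)
    (hsym : ∀ i j k, g i j k = g i k j)
    (hnull : ∀ p : Fin 3 → ℝ, (p 0) ^ 2 = (p 1) ^ 2 + (p 2) ^ 2 →
      ∑ i, ∑ j, ∑ k, g i j k * p i * p j * p k = 0) :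
    ∃ C > 0, ∀ T : ℝ, 0 < T → ∀ f h : F3, Smooth3 f → Smooth3 h →
      ∀ t x y : ℝ, t ∈ Icc (0 : ℝ) T → (x, y) ≠ ((0 : ℝ), (0 : ℝ)) →
        |∑ i, ∑ j, ∑ k, g i j k * pdi i f t x y * pdi j (pdi k h) t x y| ≤
          C * ((⨆ i : Fin 2, |Zi i f t x y|) *
                (⨆ p : Fin 3 × Fin 3, |pdi p.1 (pdi p.2 h) t x y|)
            + (⨆ i : Fin 3, |pdi i f t x y|) *
                (⨆ p : Fin 2 × Fin 3, |Zi p.1 (pdi p.2 h) t x y|)) := by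
  refine ⟨2 * (∑ i, ∑ j, ∑ k, |g i j k|) + 1, by positivity, ?_⟩
  intro T _ f h _ hh t x y _ hxy
  have hpos : 0 < x ^ 2 + y ^ 2 := by
    by_contra hcon
    refine hxy (Prod.ext ?_ ?_) <;> simp only <;> nlinarith [sq_nonneg x, sq_nonneg y]
  have hr : 0 < rad x y := Real.sqrt_pos.mpr hpos
  have hr2 : rad x y ^ 2 = x ^ 2 + y ^ 2 := Real.sq_sqrt hpos.le
  have hω : (x / rad x y) ^ 2 + (y / rad x y) ^ 2 = 1 := by
    field_simp
    exact hr2.symm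
  have hle {ι : Type} [Finite ι] (u : ι → ℝ) (i : ι) : |u i| ≤ ⨆ i, |u i| :=
    le_ciSup (f := fun i => |u i|) (Set.finite_range _).bddAbove i
  have hZ (u : Fin 2 → ℝ) (c : ℝ) (hu : ∀ i, |u i| ≤ c) (i : Fin 3) :
      |(![0, u 0, u 1] : Fin 3 → ℝ) i| ≤ c := by
    fin_cases i
    · simpa using (abs_nonneg _).trans (hu 0)
    · exact hu 0
    · exact hu 1
  -- `∂_i u = Z_i u + q_i ∂_t u`, with `Z₀ = 0`.
  have hsplit (u : F3) (i : Fin 3) : pdi i u t x y =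
      (![0, Zi 0 u t x y, Zi 1 u t x y] : Fin 3 → ℝ) i +
        (![1, -(x / rad x y), -(y / rad x y)] : Fin 3 → ℝ) i * pdi 0 u t x y := by
    fin_cases i <;> simp [pdi, Zi, Z1, Z2]
  refine null_form_bound g ![1, -(x / rad x y), -(y / rad x y)] (fun i => pdi i f t x y)
    ![0, Zi 0 f t x y, Zi 1 f t x y] (fun j k => pdi j (pdi k h) t x y)
    (fun j k => (![0, Zi 0 (pdi k h) t x y, Zi 1 (pdi k h) t x y] : Fin 3 → ℝ) j)
    ?_ (hnull _ ?_) (hsplit f) (fun j k => hsplit (pdi k h) j)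
    (fun k => pdi_comm h hh t x y 0 k) ?_ ?_ ?_ ?_
  · intro i
    fin_cases i
    · simp
    · simpa only [Fin.mk_one, Matrix.cons_val_one, Matrix.cons_val_zero, abs_neg] using
        abs_le_one_iff_mul_self_le_one.mpr (by nlinarith [sq_nonneg (y / rad x y)])
    · simpa using
        abs_le_one_iff_mul_self_le_one.mpr (by nlinarith [sq_nonneg (x / rad x y)])
  · simpa using hω.symm
  · exact hle (fun i => pdi i f t x y) 0
  · exact fun j k => hle (fun p : Fin 3 × Fin 3 => pdi p.1 (pdi p.2 h) t x y) (j, k)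
  · exact hZ (fun i => Zi i f t x y) _ (hle _)
  · exact fun j k => hZ (fun i => Zi i (pdi k h) t x y) _
      (fun i => hle (fun p : Fin 2 × Fin 3 => Zi p.1 (pdi p.2 h) t x y) (i, k)) j

end
end
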